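/- Suppose the proposal Q is independent of the previous iteration and there exists θ* = argmin{ q(θ)/π(θ) : θ ∈ Θ, π(θ) > 0 }, and set ε_{θ*} = q(θ*)/π(θ*). Then for every lower semicontinuous metric ρ on Θ and every t ≥ 1, W_ρ(P^t(θ*,·), Π) = (1 − ε_{θ*})^t ∫_Θ ρ(θ, θ*) dΠ(θ). -/

import Mathlib

/-!
At the minimiser `θ*` of `q / π`, with `ε = q θ* / π θ*`, one has `ε π ≤ q` on `Θ`, so the accepted
proposal density from `θ*` is exactly `ε π` and `P(θ*, ·) = ε Π + (1 - ε) δ_{θ*}`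
(`mhiKernel_argmin`). The kernel is reversible, hence `Π` is invariant (`bind_mhiKernel`), and by
induction `P^t(θ*, ·) = (1 - (1 - ε)^t) Π + (1 - ε)^t δ_{θ*}` (`kernelIter_eq_mixture`).

The distance from a mixture `u Π + w δ_{x₀}` (`u + w = 1`) to `Π` equals `w ∫ ρ(θ, x₀) dΠ(θ)`
(`wassersteinDist_mixture_le`, `le_wassersteinDist_mixture`). The upper bound leaves the `u Π` part on the diagonal and couples the
rest independently. For the lower bound, `θ ↦ min (ρ(θ, x₀)) n` is `1`-Lipschitz for `ρ`, so it is a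
test function in the easy half of Kantorovich duality, and it vanishes at `x₀`; the truncation makes
its `Π`-integral finite, and `n → ∞` gives the claim by monotone convergence, even when the
integral on the right is infinite.
-/

open MeasureTheory ENNReal Filter Matrix
open scoped BigOperators NNReal

noncomputable section

/-- The set of couplings of two measures. -/
def couplings {E : Type*} [MeasurableSpace E] (μ ν : Measure E) : Set (Measure (E × E)) :=
  {ξ | ξ.map Prod.fst = μ ∧ ξ.map Prod.snd = ν}

/-- The `L₁` Wasserstein (transportation) distance with cost `ρ`, valued in `ℝ≥0∞`:
`W_ρ(μ, ν) = inf over couplings ξ of ∫ ρ dξ`. -/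
def wassersteinDist {E : Type*} [MeasurableSpace E] (ρ : E → E → ℝ)
    (μ ν : Measure E) : ℝ≥0∞ :=
  ⨅ ξ ∈ couplings μ ν, ∫⁻ p, ENNReal.ofReal (ρ p.1 p.2) ∂ξ

/-- `ρ` is a lower semicontinuous metric on the set `Θ`. -/
def IsLSCMetricOn {E : Type*} [TopologicalSpace E] (Θ : Set E) (ρ : E → E → ℝ) : Prop :=
  LowerSemicontinuousOn (fun p : E × E => ρ p.1 p.2) (Θ ×ˢ Θ) ∧
  (∀ x ∈ Θ, ∀ y ∈ Θ, 0 ≤ ρ x y) ∧ (∀ x ∈ Θ, ρ x x = 0) ∧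
  (∀ x ∈ Θ, ∀ y ∈ Θ, ρ x y = 0 → x = y) ∧
  (∀ x ∈ Θ, ∀ y ∈ Θ, ρ x y = ρ y x) ∧
  (∀ x ∈ Θ, ∀ y ∈ Θ, ∀ z ∈ Θ, ρ x z ≤ ρ x y + ρ y z)

/-- Metropolis–Hastings acceptance ratio for target density `π` and proposal density `q`. -/
def mhAccept {E : Type*} (π : E → ℝ) (q : E → E → ℝ) (θ θ' : E) : ℝ :=
  if 0 < π θ * q θ θ' then min (π θ' * q θ' θ / (π θ * q θ θ')) 1 else 1

/-- Metropolis–Hastings overall acceptance probability `A(θ)`. -/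
def mhAcceptProb {E : Type*} [MeasureSpace E] (Θ : Set E) (π : E → ℝ) (q : E → E → ℝ)
    (θ : E) : ℝ :=
  ∫ θ' in Θ, mhAccept π q θ θ' * q θ θ'

/-- The Metropolis–Hastings Markov kernel
`P(θ, B) = ∫_B a(θ,θ') q(θ,θ') dθ' + δ_θ(B) (1 - A(θ))`. -/
def mhKernel {E : Type*} [MeasureSpace E] (Θ : Set E) (π : E → ℝ) (q : E → E → ℝ)
    (θ : E) : Measure E :=
  (volume.restrict Θ).withDensity (fun θ' => ENNReal.ofReal (mhAccept π q θ θ' * q θ θ')) +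
    (ENNReal.ofReal (1 - mhAcceptProb Θ π q θ)) • Measure.dirac θ

/-- `t`-fold iterate `P^t` of a Markov kernel, with `P^0(θ, ·) = δ_θ`. -/
def kernelIter {E : Type*} [MeasurableSpace E] (P : E → Measure E) : ℕ → E → Measure E
  | 0, θ => Measure.dirac θ
  | (t + 1), θ => (P θ).bind (kernelIter P t)


/-- Acceptance ratio for the Metropolis–Hastings independence (MHI) algorithm, whose
proposal density `q` does not depend on the current state. -/
def mhiAccept {E : Type*} (π : E → ℝ) (q : E → ℝ) (θ θ' : E) : ℝ :=
  if 0 < π θ * q θ' then min (π θ' * q θ / (π θ * q θ')) 1 else 1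

/-- Overall acceptance probability `A(θ)` for the MHI algorithm. -/
def mhiAcceptProb {E : Type*} [MeasureSpace E] (Θ : Set E) (π : E → ℝ) (q : E → ℝ)
    (θ : E) : ℝ :=
  ∫ θ' in Θ, mhiAccept π q θ θ' * q θ'

/-- The MHI Markov kernel
`P(θ, B) = ∫_B a(θ,θ') q(θ') dθ' + δ_θ(B) (1 - A(θ))`. -/
def mhiKernel {E : Type*} [MeasureSpace E] (Θ : Set E) (π : E → ℝ) (q : E → ℝ)
    (θ : E) : Measure E :=
  (volume.restrict Θ).withDensity (fun θ' => ENNReal.ofReal (mhiAccept π q θ θ' * q θ')) +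
    (ENNReal.ofReal (1 - mhiAcceptProb Θ π q θ)) • Measure.dirac θ

end

/-! ### Iterates of a kernel from a mixture -/

section Iterates

variable {E : Type*} [MeasurableSpace E]

theorem measurable_kernelIter {P : E → Measure E} (hP : Measurable P) (t : ℕ) :
    Measurable (kernelIter P t) := by
  induction t with
  | zero => exact Measure.measurable_dirac
  | succ t ih => exact (Measure.measurable_bind' ih).comp hP

theorem bind_kernelIter {P : E → Measure E} (hP : Measurable P) {μ : Measure E}
    (hinv : μ.bind P = μ) (t : ℕ) : μ.bind (kernelIter P t) = μ := by
  induction t with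
  | zero => exact Measure.bind_dirac
  | succ t ih =>
    change μ.bind (fun θ => (P θ).bind (kernelIter P t)) = μ
    rw [← Measure.bind_bind hP.aemeasurable (measurable_kernelIter hP t).aemeasurable, hinv, ih]

theorem kernelIter_eq_mixture {P : E → Measure E} (hP : Measurable P) {μ : Measure E}
    (hinv : μ.bind P = μ) {x₀ : E} {ε : ℝ} (hε0 : 0 ≤ ε) (hε1 : ε ≤ 1)
    (hx₀ : P x₀ = ENNReal.ofReal ε • μ + ENNReal.ofReal (1 - ε) • Measure.dirac x₀) (t : ℕ) :
    kernelIter P t x₀ = ENNReal.ofReal (1 - (1 - ε) ^ t) • μ +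
      ENNReal.ofReal ((1 - ε) ^ t) • Measure.dirac x₀ := by
  induction t with
  | zero => simp [kernelIter]
  | succ t ih =>
    have hK := measurable_kernelIter hP t
    have h0 : 0 ≤ 1 - ε := by linarith
    have h1 : (1 - ε) ^ t ≤ 1 := pow_le_one₀ h0 (by linarith)
    have hstep : (P x₀).bind (kernelIter P t) =
        ENNReal.ofReal ε • μ + ENNReal.ofReal (1 - ε) • kernelIter P t x₀ := by
      ext s hs
      have hms : Measurable fun θ => kernelIter P t θ s := (Measure.measurable_coe hs).comp hK
      rw [Measure.bind_apply hs hK.aemeasurable, hx₀, lintegral_add_measure,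
        lintegral_smul_measure, lintegral_smul_measure, lintegral_dirac' _ hms,
        ← Measure.bind_apply hs hK.aemeasurable, bind_kernelIter hP hinv]
      simp
    change (P x₀).bind (kernelIter P t) = _
    rw [hstep, ih, smul_add, smul_smul, smul_smul, ← add_assoc, ← add_smul,
      ← ENNReal.ofReal_mul h0, ← ENNReal.ofReal_mul h0,
      ← ENNReal.ofReal_add hε0 (mul_nonneg h0 (by linarith))]
    congr 3 <;> ring_nf

end Iterates

/-! ### The independence kernel -/

section Kernel

variable {E : Type*} {π q : E → ℝ}

theorem mhiAccept_nonneg (hπ0 : ∀ θ, 0 ≤ π θ) (hq0 : ∀ θ, 0 ≤ q θ) (x y : E) :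
    0 ≤ mhiAccept π q x y := by
  unfold mhiAccept
  split_ifs with h
  · exact le_min (div_nonneg (mul_nonneg (hπ0 _) (hq0 _)) h.le) zero_le_one
  · exact zero_le_one

theorem mhiAccept_le_one (x y : E) : mhiAccept π q x y ≤ 1 := by
  unfold mhiAccept
  split_ifs
  · exact min_le_right _ _
  · exact le_rfl

/-- Detailed balance: the flow `π(x) a(x, y) q(y)` is a symmetric function of `(x, y)`. -/
theorem mul_mhiAccept_mul (hπ0 : ∀ θ, 0 ≤ π θ) (hq0 : ∀ θ, 0 ≤ q θ) (x y : E) :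
    π x * (mhiAccept π q x y * q y) = min (π y * q x) (π x * q y) := by
  unfold mhiAccept
  split_ifs with h
  · have : π x * (min (π y * q x / (π x * q y)) 1 * q y) =
        min (π y * q x / (π x * q y)) 1 * (π x * q y) := by ring
    rw [this, min_mul_of_nonneg _ _ h.le, one_mul, div_mul_cancel₀ _ h.ne']
  · have h0 : π x * q y = 0 := le_antisymm (not_lt.1 h) (mul_nonneg (hπ0 _) (hq0 _))
    rw [one_mul, h0, min_eq_right (mul_nonneg (hπ0 _) (hq0 _))]

variable [MeasureSpace E] {Θ : Set E}

theorem measurable_mhiAccept_mul (hπ : Measurable π) (hq : Measurable q) :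
    Measurable fun p : E × E => mhiAccept π q p.1 p.2 * q p.2 := by
  unfold mhiAccept
  refine Measurable.mul (Measurable.ite ?_ ?_ measurable_const) (hq.comp measurable_snd)
  · exact measurableSet_lt measurable_const
      ((hπ.comp measurable_fst).mul (hq.comp measurable_snd))
  · exact (((hπ.comp measurable_snd).mul (hq.comp measurable_fst)).div
      ((hπ.comp measurable_fst).mul (hq.comp measurable_snd))).min measurable_const

theorem lintegral_mhiAccept_mul_le (hq0 : ∀ θ, 0 ≤ q θ)
    (hQ : ∫⁻ y in Θ, ENNReal.ofReal (q y) = 1) (x : E) :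
    ∫⁻ y in Θ, ENNReal.ofReal (mhiAccept π q x y * q y) ≤ 1 := by
  rw [← hQ]
  exact lintegral_mono fun y => ENNReal.ofReal_le_ofReal
    (mul_le_of_le_one_left (hq0 y) (mhiAccept_le_one x y))

/-- The rejection probability as a difference in `ℝ≥0∞`. -/
theorem ofReal_one_sub_mhiAcceptProb (hπ : Measurable π) (hπ0 : ∀ θ, 0 ≤ π θ)
    (hq : Measurable q) (hq0 : ∀ θ, 0 ≤ q θ)
    (hQ : ∫⁻ y in Θ, ENNReal.ofReal (q y) = 1) (x : E) :
    ENNReal.ofReal (1 - mhiAcceptProb Θ π q x) =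
      1 - ∫⁻ y in Θ, ENNReal.ofReal (mhiAccept π q x y * q y) := by
  have hm : Measurable fun y => mhiAccept π q x y * q y :=
    (measurable_mhiAccept_mul hπ hq).comp measurable_prodMk_left
  unfold mhiAcceptProb
  rw [integral_eq_lintegral_of_nonneg_ae
    (ae_of_all _ fun y => mul_nonneg (mhiAccept_nonneg hπ0 hq0 x y) (hq0 y))
    hm.aestronglyMeasurable, ENNReal.ofReal_sub _ ENNReal.toReal_nonneg, ENNReal.ofReal_one,
    ENNReal.ofReal_toReal]
  exact ((lintegral_mhiAccept_mul_le hq0 hQ x).trans_lt ENNReal.one_lt_top).ne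

theorem mhiKernel_apply (hπ : Measurable π) (hπ0 : ∀ θ, 0 ≤ π θ)
    (hq : Measurable q) (hq0 : ∀ θ, 0 ≤ q θ)
    (hQ : ∫⁻ y in Θ, ENNReal.ofReal (q y) = 1) (x : E) {s : Set E} (hs : MeasurableSet s) :
    mhiKernel Θ π q x s =
      (∫⁻ y in Θ, s.indicator 1 y * ENNReal.ofReal (mhiAccept π q x y * q y)) +
      (1 - ∫⁻ y in Θ, ENNReal.ofReal (mhiAccept π q x y * q y)) * s.indicator 1 x := by
  unfold mhiKernel
  rw [ofReal_one_sub_mhiAcceptProb hπ hπ0 hq hq0 hQ, Measure.add_apply, Measure.smul_apply,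
    Measure.dirac_apply' _ hs, withDensity_apply _ hs, ← lintegral_indicator hs, smul_eq_mul]
  congr 2
  ext y
  by_cases hy : y ∈ s <;> simp [hy]

theorem measurable_mhiKernel [SFinite (volume : Measure E)]
    (hπ : Measurable π) (hπ0 : ∀ θ, 0 ≤ π θ)
    (hq : Measurable q) (hq0 : ∀ θ, 0 ≤ q θ)
    (hQ : ∫⁻ y in Θ, ENNReal.ofReal (q y) = 1) : Measurable (mhiKernel Θ π q) := by
  refine Measure.measurable_of_measurable_coe _ fun s hs => ?_
  simp_rw [mhiKernel_apply hπ hπ0 hq hq0 hQ _ hs]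
  have hm := (measurable_mhiAccept_mul hπ hq).ennreal_ofReal
  have hi : Measurable (s.indicator (1 : E → ℝ≥0∞)) := measurable_one.indicator hs
  have h1 : Measurable fun p : E × E =>
      s.indicator 1 p.2 * ENNReal.ofReal (mhiAccept π q p.1 p.2 * q p.2) :=
    (hi.comp measurable_snd).mul hm
  exact h1.lintegral_prod_right'.add ((measurable_const.sub hm.lintegral_prod_right').mul hi)

/-- The target distribution is invariant, by detailed balance and Tonelli. -/
theorem bind_mhiKernel [SFinite (volume : Measure E)]
    (hπ : Measurable π) (hπ0 : ∀ θ, 0 ≤ π θ)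
    (hq : Measurable q) (hq0 : ∀ θ, 0 ≤ q θ)
    (hQ : ∫⁻ y in Θ, ENNReal.ofReal (q y) = 1) {Pi : Measure E}
    (hPi : Pi = (volume.restrict Θ).withDensity fun θ => ENNReal.ofReal (π θ)) :
    Pi.bind (mhiKernel Θ π q) = Pi := by
  have hP := measurable_mhiKernel hπ hπ0 hq hq0 hQ
  ext s hs
  have hi : Measurable (s.indicator (1 : E → ℝ≥0∞)) := measurable_one.indicator hs
  have hm := (measurable_mhiAccept_mul hπ hq).ennreal_ofReal
  have hα := hm.lintegral_prod_right' (ν := volume.restrict Θ)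
  set ν : Measure E := volume.restrict Θ with hν
  set F : E → E → ℝ≥0∞ := fun x y => ENNReal.ofReal (mhiAccept π q x y * q y) with hF
  have hFx : ∀ x, Measurable (F x) := fun x => hm.comp measurable_prodMk_left
  have hsymm : ∀ x y, ENNReal.ofReal (π x) * F x y = ENNReal.ofReal (π y) * F y x := by
    intro x y
    simp only [hF]
    rw [← ENNReal.ofReal_mul (hπ0 x), ← ENNReal.ofReal_mul (hπ0 y), mul_mhiAccept_mul hπ0 hq0,
      mul_mhiAccept_mul hπ0 hq0, min_comm]
  have hflow : ∫⁻ x, ENNReal.ofReal (π x) * ∫⁻ y, s.indicator 1 y * F x y ∂ν ∂ν =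
      ∫⁻ y, ENNReal.ofReal (π y) * ((∫⁻ x, F y x ∂ν) * s.indicator 1 y) ∂ν := by
    calc _ = ∫⁻ x, ∫⁻ y, ENNReal.ofReal (π x) * (s.indicator 1 y * F x y) ∂ν ∂ν := by
          refine lintegral_congr fun x => ?_
          exact (lintegral_const_mul _ (hi.mul (hFx x))).symm
      _ = ∫⁻ y, ∫⁻ x, ENNReal.ofReal (π x) * (s.indicator 1 y * F x y) ∂ν ∂ν := by
          refine lintegral_lintegral_swap (Measurable.aemeasurable ?_)
          exact (hπ.ennreal_ofReal.comp measurable_fst).mul ((hi.comp measurable_snd).mul hm)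
      _ = ∫⁻ y, ∫⁻ x, (ENNReal.ofReal (π y) * s.indicator 1 y) * F y x ∂ν ∂ν := by
          refine lintegral_congr fun y => lintegral_congr fun x => ?_
          rw [mul_left_comm, hsymm]
          ring
      _ = _ := by
          refine lintegral_congr fun y => ?_
          rw [lintegral_const_mul _ (hFx y)]
          ring
  rw [Measure.bind_apply hs hP.aemeasurable]
  simp_rw [mhiKernel_apply hπ hπ0 hq hq0 hQ _ hs]
  have hA : Measurable fun x => ∫⁻ y, s.indicator 1 y * F x y ∂ν :=
    Measurable.lintegral_prod_right' (f := fun p : E × E => s.indicator 1 p.2 * F p.1 p.2)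
      ((hi.comp measurable_snd).mul hm)
  have hB : Measurable fun x => (1 - ∫⁻ y, F x y ∂ν) * s.indicator 1 x :=
    (measurable_const.sub hα).mul hi
  rw [hPi]
  refine (lintegral_withDensity_eq_lintegral_mul _ hπ.ennreal_ofReal (hA.add hB)).trans ?_
  change ∫⁻ x, ENNReal.ofReal (π x) * ((∫⁻ y, s.indicator 1 y * F x y ∂ν) +
    (1 - ∫⁻ y, F x y ∂ν) * s.indicator 1 x) ∂ν = _
  simp only [mul_add]
  refine (lintegral_add_left (hπ.ennreal_ofReal.mul hA) _).trans ?_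
  refine (congrArg (· + _) hflow).trans ?_
  refine (lintegral_add_left (hπ.ennreal_ofReal.mul (hα.mul hi)) _).symm.trans ?_
  rw [withDensity_apply _ hs,
    ← lintegral_indicator hs]
  refine lintegral_congr fun x => ?_
  change ENNReal.ofReal (π x) * ((∫⁻ y, F x y ∂ν) * s.indicator 1 x) +
    ENNReal.ofReal (π x) * ((1 - ∫⁻ y, F x y ∂ν) * s.indicator 1 x) = _
  rw [← mul_add, ← add_mul, add_tsub_cancel_of_le (lintegral_mhiAccept_mul_le hq0 hQ x)]
  by_cases hx : x ∈ s <;> simp [hx]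

/-- From the minimiser of `q / π` the kernel is an explicit mixture of the target and of staying
put. -/
theorem mhiKernel_argmin (hΘ : MeasurableSet Θ) (hπ : Measurable π) (hπ0 : ∀ θ, 0 ≤ π θ)
    (hq : Measurable q) (hq0 : ∀ θ, 0 ≤ q θ)
    (hQ : ∫⁻ y in Θ, ENNReal.ofReal (q y) = 1) {Pi : Measure E} [IsProbabilityMeasure Pi]
    (hPi : Pi = (volume.restrict Θ).withDensity fun θ => ENNReal.ofReal (π θ))
    {x₀ : E} (hx₀ : 0 < π x₀)
    (hmin : ∀ θ ∈ Θ, 0 < π θ → q x₀ / π x₀ ≤ q θ / π θ) :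
    q x₀ / π x₀ ≤ 1 ∧ mhiKernel Θ π q x₀ = ENNReal.ofReal (q x₀ / π x₀) • Pi +
      ENNReal.ofReal (1 - q x₀ / π x₀) • Measure.dirac x₀ := by
  set ε := q x₀ / π x₀ with hε
  have hε0 : 0 ≤ ε := div_nonneg (hq0 _) hx₀.le
  have hle : ∀ y ∈ Θ, ε * π y ≤ q y := by
    intro y hy
    rcases (hπ0 y).eq_or_lt with h | h
    · rw [← h, mul_zero]; exact hq0 y
    · exact (le_div_iff₀ h).1 (hmin y hy h)
  have hacc : ∀ y ∈ Θ, mhiAccept π q x₀ y * q y = ε * π y := by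
    intro y hy
    have h := mul_mhiAccept_mul hπ0 hq0 x₀ y
    have hq' : q x₀ = ε * π x₀ := (div_mul_cancel₀ _ hx₀.ne').symm
    have hmin' : π y * q x₀ ≤ π x₀ * q y := by
      rw [hq']
      nlinarith [mul_le_mul_of_nonneg_left (hle y hy) hx₀.le]
    rw [min_eq_left hmin', hq'] at h
    exact mul_left_cancel₀ hx₀.ne' (h.trans (by ring))
  have hπ1 : ∫⁻ y in Θ, ENNReal.ofReal (π y) = 1 := by
    have h := measure_univ (μ := Pi)
    rwa [hPi, withDensity_apply _ MeasurableSet.univ, Measure.restrict_univ] at h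
  have hcongr : (fun y => ENNReal.ofReal (mhiAccept π q x₀ y * q y)) =ᵐ[volume.restrict Θ]
      fun y => ENNReal.ofReal ε * ENNReal.ofReal (π y) := by
    filter_upwards [ae_restrict_mem hΘ] with y hy
    rw [hacc y hy, ENNReal.ofReal_mul hε0]
  have hα : ∫⁻ y in Θ, ENNReal.ofReal (mhiAccept π q x₀ y * q y) = ENNReal.ofReal ε := by
    rw [lintegral_congr_ae hcongr, lintegral_const_mul _ hπ.ennreal_ofReal, hπ1, mul_one]
  refine ⟨?_, ?_⟩
  · have h := lintegral_mhiAccept_mul_le (π := π) hq0 hQ x₀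
    rwa [hα, ENNReal.ofReal_le_one] at h
  · unfold mhiKernel
    rw [ofReal_one_sub_mhiAcceptProb hπ hπ0 hq hq0 hQ, hα, withDensity_congr_ae hcongr,
      ENNReal.ofReal_sub _ hε0, ENNReal.ofReal_one, hPi]
    congr 1
    exact withDensity_smul _ hπ.ennreal_ofReal

end Kernel

/-! ### Distance from a mixture with a Dirac mass -/

section Wasserstein

variable {E : Type*} [TopologicalSpace E] [MeasurableSpace E]

/-- Extending `ρ(·, x₀)` by zero off the closed set `Θ` gives a measurable function; `ρ` itself is
unconstrained off `Θ`. -/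
theorem IsLSCMetricOn.measurable_indicator [BorelSpace E] {Θ : Set E} (hΘ : IsClosed Θ)
    {ρ : E → E → ℝ} (hρ : IsLSCMetricOn Θ ρ) {x₀ : E} (hx₀ : x₀ ∈ Θ) :
    Measurable (Θ.indicator fun x => ρ x x₀) := by
  have hl : LowerSemicontinuousOn (fun x => ρ x x₀) Θ :=
    LowerSemicontinuousOn.comp (g := fun x => (x, x₀)) hρ.1 (by fun_prop)
      (fun x hx => ⟨hx, hx₀⟩)
  refine measurable_of_Ioi fun b => ?_
  obtain ⟨u, hu, hub⟩ := lowerSemicontinuousOn_iff_preimage_Ioi.1 hl b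
  rw [Set.indicator_preimage]
  have hc : MeasurableSet ((0 : E → ℝ) ⁻¹' Set.Ioi b) := measurable_zero measurableSet_Ioi
  rw [Set.ite, Set.inter_comm, hub]
  exact (hΘ.measurableSet.inter hu.measurableSet).union (hc.diff hΘ.measurableSet)

theorem wassersteinDist_mixture_le {Θ : Set E}
    {ρ : E → E → ℝ} (hρ : IsLSCMetricOn Θ ρ) {x₀ : E} (hx₀ : x₀ ∈ Θ)
    {μ : Measure E} [IsProbabilityMeasure μ] (hμ : ∀ᵐ x ∂μ, x ∈ Θ) {u w : ℝ≥0∞}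
    (huw : u + w = 1) :
    wassersteinDist ρ (u • μ + w • Measure.dirac x₀) μ ≤
      w * ∫⁻ θ, ENNReal.ofReal (ρ θ x₀) ∂μ := by
  have hd : Measurable fun x : E => (x, x) := measurable_id.prodMk measurable_id
  have hp : Measurable fun x : E => (x₀, x) := measurable_prodMk_left
  refine (iInf₂_le (u • μ.map (fun x => (x, x)) + w • μ.map (fun x => (x₀, x))) ⟨?_, ?_⟩).trans ?_
  · rw [lintegral_add_measure, lintegral_smul_measure, lintegral_smul_measure]
    have h1 : ∫⁻ p, ENNReal.ofReal (ρ p.1 p.2) ∂(μ.map fun x => (x, x)) = 0 := by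
      refine le_antisymm ((lintegral_map_le _ _).trans (le_of_eq ?_)) zero_le
      rw [lintegral_congr_ae (g := fun _ => 0), lintegral_zero]
      filter_upwards [hμ] with x hx
      simp [hρ.2.2.1 x hx]
    have h2 : ∫⁻ p, ENNReal.ofReal (ρ p.1 p.2) ∂(μ.map fun x => (x₀, x)) ≤
        ∫⁻ θ, ENNReal.ofReal (ρ θ x₀) ∂μ := by
      refine (lintegral_map_le _ _).trans (le_of_eq (lintegral_congr_ae ?_))
      filter_upwards [hμ] with x hx
      rw [hρ.2.2.2.2.1 x₀ hx₀ x hx]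
    rw [h1, smul_zero, zero_add, smul_eq_mul]
    gcongr
  · rw [Measure.map_add _ _ measurable_fst, Measure.map_smul, Measure.map_smul,
      Measure.map_map measurable_fst hd, Measure.map_map measurable_fst hp]
    congr 2
    · exact Measure.map_id
    · change μ.map (fun _ => x₀) = _
      simp
  · rw [Measure.map_add _ _ measurable_snd, Measure.map_smul, Measure.map_smul,
      Measure.map_map measurable_snd hd, Measure.map_map measurable_snd hp]
    change u • μ.map id + w • μ.map id = μ
    rw [Measure.map_id, ← add_smul, huw, one_smul]

theorem le_wassersteinDist_mixture [BorelSpace E] {Θ : Set E} (hΘ : IsClosed Θ)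
    {ρ : E → E → ℝ} (hρ : IsLSCMetricOn Θ ρ) {x₀ : E} (hx₀ : x₀ ∈ Θ)
    {μ : Measure E} [IsProbabilityMeasure μ] (hμ : ∀ᵐ x ∂μ, x ∈ Θ) {u w : ℝ≥0∞}
    (huw : u + w = 1) :
    w * ∫⁻ θ, ENNReal.ofReal (ρ θ x₀) ∂μ ≤
      wassersteinDist ρ (u • μ + w • Measure.dirac x₀) μ := by
  refine le_iInf₂ fun ξ hξ => ?_
  obtain ⟨hfst, hsnd⟩ := hξ
  set g : E → ℝ≥0∞ := fun x => ENNReal.ofReal (Θ.indicator (fun x => ρ x x₀) x) with hg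
  have hgm : Measurable g := (hρ.measurable_indicator hΘ hx₀).ennreal_ofReal
  have hgΘ : ∀ x ∈ Θ, g x = ENNReal.ofReal (ρ x x₀) := fun x hx => by simp [hg, hx]
  have hg0 : g x₀ = 0 := by simp [hgΘ x₀ hx₀, hρ.2.2.1 x₀ hx₀]
  have hgn : ∀ n : ℕ, Measurable fun x => min (g x) n := fun n => hgm.min measurable_const
  have hmΘ := hΘ.measurableSet
  have hξ1 : ∀ᵐ p ∂ξ, p.1 ∈ Θ := by
    refine (ae_map_iff (p := fun x => x ∈ Θ) measurable_fst.aemeasurable hmΘ).1 ?_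
    rw [hfst, ae_add_measure_iff]
    refine ⟨Measure.ae_smul_measure hμ u, Measure.ae_smul_measure ?_ w⟩
    exact (ae_dirac_iff hmΘ).2 hx₀
  have hξ2 : ∀ᵐ p ∂ξ, p.2 ∈ Θ := by
    refine (ae_map_iff (p := fun x => x ∈ Θ) measurable_snd.aemeasurable hmΘ).1 ?_
    rwa [hsnd]
  have hkey : ∀ n : ℕ, w * ∫⁻ x, min (g x) n ∂μ ≤ ∫⁻ p, ENNReal.ofReal (ρ p.1 p.2) ∂ξ := by
    intro n
    set J := ∫⁻ x, min (g x) n ∂μ with hJ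
    have hJfin : J ≠ ∞ := by
      have : J ≤ ∫⁻ _, (n : ℝ≥0∞) ∂μ := lintegral_mono fun x => min_le_right _ _
      rw [lintegral_const, measure_univ, mul_one] at this
      exact (this.trans_lt (ENNReal.natCast_lt_top n)).ne
    have h2 : ∫⁻ p, min (g p.2) n ∂ξ = J := by
      rw [hJ, ← lintegral_map (hgn n) measurable_snd, hsnd]
    have h1 : ∫⁻ p, min (g p.1) n ∂ξ = u * J := by
      rw [← lintegral_map (hgn n) measurable_fst, hfst, lintegral_add_measure,
        lintegral_smul_measure, lintegral_smul_measure, lintegral_dirac' _ (hgn n), hg0]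
      simp [hJ]
    have hle : J ≤ u * J + ∫⁻ p, ENNReal.ofReal (ρ p.1 p.2) ∂ξ := by
      rw [← h1, ← h2]
      refine (lintegral_mono_ae ?_).trans (lintegral_add_left ((hgn n).comp measurable_fst) _).le
      filter_upwards [hξ1, hξ2] with p hp1 hp2
      have htri : g p.2 ≤ g p.1 + ENNReal.ofReal (ρ p.1 p.2) := by
        rw [hgΘ _ hp1, hgΘ _ hp2, ← ENNReal.ofReal_add (hρ.2.1 _ hp1 _ hx₀) (hρ.2.1 _ hp1 _ hp2)]
        refine ENNReal.ofReal_le_ofReal ?_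
        have := hρ.2.2.2.2.2 p.2 hp2 p.1 hp1 x₀ hx₀
        rw [hρ.2.2.2.2.1 p.2 hp2 p.1 hp1] at this
        linarith
      change min (g p.2) (n : ℝ≥0∞) ≤ min (g p.1) (n : ℝ≥0∞) + ENNReal.ofReal (ρ p.1 p.2)
      rcases le_total (g p.1) n with h | h
      · rw [min_eq_left h]
        exact (min_le_left _ _).trans htri
      · rw [min_eq_right h]
        exact (min_le_right _ _).trans le_self_add
    have hsplit : J = u * J + w * J := by rw [← add_mul, huw, one_mul]
    have hu : u ≤ 1 := huw ▸ le_self_add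
    have huJ : u * J ≠ ∞ := ENNReal.mul_ne_top (hu.trans_lt ENNReal.one_lt_top).ne hJfin
    exact (ENNReal.add_le_add_iff_left huJ).1 (hsplit.symm.trans_le hle)
  have hsup : ∫⁻ x, ENNReal.ofReal (ρ x x₀) ∂μ = ⨆ n : ℕ, ∫⁻ x, min (g x) n ∂μ := by
    rw [← lintegral_iSup hgn fun m n hmn x => min_le_min_left _ (by exact_mod_cast hmn)]
    refine lintegral_congr_ae ?_
    filter_upwards [hμ] with x hx
    rw [← hgΘ x hx, ← inf_iSup_eq, ENNReal.iSup_natCast]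
    simp
  rw [hsup, ENNReal.mul_iSup]
  exact iSup_le hkey

end Wasserstein

/-- Proposition 4.1, exact convergence rate for the MHI algorithm.
If the proposal is independent of the previous iteration and
`θ* = argmin { q(θ)/π(θ) : θ ∈ Θ, π(θ) > 0 }` exists, then with `ε = q(θ*)/π(θ*)`,
for every lower semicontinuous metric `ρ` on `Θ` and every `t ≥ 1`,
`W_ρ(P^t(θ*,·), Π) = (1 - ε)^t ∫_Θ ρ(θ, θ*) dΠ(θ)`. -/
theorem mhi_exact_wasserstein_rate
    {d : ℕ}
    (Θ : Set (Fin d → ℝ)) (hΘne : Θ.Nonempty) (hΘcl : IsClosed Θ)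
    (π : (Fin d → ℝ) → ℝ) (q : (Fin d → ℝ) → ℝ)
    (hπmeas : Measurable π) (hπ0 : ∀ θ, 0 ≤ π θ)
    (hqmeas : Measurable q) (hq0 : ∀ θ', 0 ≤ q θ')
    (hqpos : ∀ θ' ∈ Θ, 0 < π θ' → 0 < q θ')
    -- `Π` is a probability measure on `Θ` with Lebesgue density `π`
    (Pi : Measure (Fin d → ℝ)) [IsProbabilityMeasure Pi]
    (hPi : Pi = (volume.restrict Θ).withDensity fun θ => ENNReal.ofReal (π θ))
    -- the proposal `Q` is a probability measure on `Θ` with density `q`, different from `Π`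
    (hQprob : IsProbabilityMeasure
      ((volume.restrict Θ).withDensity fun θ' => ENNReal.ofReal (q θ')))
    (hQnePi : ((volume.restrict Θ).withDensity fun θ' => ENNReal.ofReal (q θ')) ≠ Pi)
    -- `θ* = argmin { q(θ)/π(θ) : θ ∈ Θ, π(θ) > 0 }`
    (θstar : Fin d → ℝ) (hθstar : θstar ∈ Θ) (hπθstar : 0 < π θstar)
    (hargmin : ∀ θ ∈ Θ, 0 < π θ → q θstar / π θstar ≤ q θ / π θ) :
    ∀ ρ : (Fin d → ℝ) → (Fin d → ℝ) → ℝ, IsLSCMetricOn Θ ρ →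
      ∀ t : ℕ, 1 ≤ t →
        wassersteinDist ρ (kernelIter (mhiKernel Θ π q) t θstar) Pi =
          ENNReal.ofReal ((1 - q θstar / π θstar) ^ t) *
            ∫⁻ θ, ENNReal.ofReal (ρ θ θstar) ∂Pi := by
  intro ρ hρ t _
  have hΘm : MeasurableSet Θ := hΘcl.measurableSet
  have hQ : ∫⁻ y in Θ, ENNReal.ofReal (q y) = 1 := by
    have h := hQprob.measure_univ
    rwa [withDensity_apply _ MeasurableSet.univ, Measure.restrict_univ] at h
  have hPiΘ : ∀ᵐ x ∂Pi, x ∈ Θ := by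
    rw [hPi]
    exact (withDensity_absolutelyContinuous _ _).ae_le (ae_restrict_mem hΘm)
  obtain ⟨hε1, hker⟩ := mhiKernel_argmin hΘm hπmeas hπ0 hqmeas hq0 hQ hPi hπθstar hargmin
  have hε0 : 0 ≤ q θstar / π θstar := div_nonneg (hq0 _) hπθstar.le
  have h0 : 0 ≤ 1 - q θstar / π θstar := by linarith
  have h1 : (1 - q θstar / π θstar) ^ t ≤ 1 := pow_le_one₀ h0 (by linarith)
  have huw : ENNReal.ofReal (1 - (1 - q θstar / π θstar) ^ t) +
      ENNReal.ofReal ((1 - q θstar / π θstar) ^ t) = 1 := by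
    rw [← ENNReal.ofReal_add (by linarith) (pow_nonneg h0 t), sub_add_cancel, ENNReal.ofReal_one]
  rw [kernelIter_eq_mixture (measurable_mhiKernel hπmeas hπ0 hqmeas hq0 hQ)
    (bind_mhiKernel hπmeas hπ0 hqmeas hq0 hQ hPi) hε0 hε1 hker t]
  exact le_antisymm (wassersteinDist_mixture_le hρ hθstar hPiΘ huw)
    (le_wassersteinDist_mixture hΘcl hρ hθstar hPiΘ huw)
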